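/- Quadratic-form dissipation inequality (2.16): Let n ≥ 2 be an integer, μ > 0 and λ real with 2μ + nλ > 0, and β = 2μ + λ. Then there exists a constant C > 0, depending only on μ, λ and n, such that for all real numbers a and b: β(a + (n−1)b)² − 2μ(n−1)(2ab + (n−2)b²) ≥ C(a² + b²). In particular, for a = r^{n−1}u_x and b = r^{−1}vu (using the identities (r^{n−1}u)_x = r^{n−1}u_x + (n−1)r^{−1}vu and v(r^{n−2}u²)_x = 2(r^{n−1}u_x)(r^{−1}vu) + (n−2)(r^{−1}vu)², valid when r^{n−1}r_x = v), one has β((r^{n−1}u)_x)² − 2μ(n−1)v(r^{n−2}u²)_x ≥ C(r^{−2}v²u² + r^{2(n−1)}u_x²). -/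

import Mathlib

open Real

/-- Quadratic-form dissipation inequality (2.16): for `n ≥ 2`, `μ > 0`,
`2μ + nλ > 0` and `β = 2μ + λ`, there is `C > 0` depending only on `μ, λ, n`
with `β(a + (n-1)b)² - 2μ(n-1)(2ab + (n-2)b²) ≥ C(a² + b²)` for all reals
`a, b`.  In particular, with `a = r^{n-1}u_x` and `b = r⁻¹vu`, for any `w₁, w₂`
satisfying the identities `w₁ = (r^{n-1}u)_x = r^{n-1}u_x + (n-1)r⁻¹vu` and
`v·w₂ = v(r^{n-2}u²)_x = 2(r^{n-1}u_x)(r⁻¹vu) + (n-2)(r⁻¹vu)²` one has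
`βw₁² - 2μ(n-1)v·w₂ ≥ C(r⁻²v²u² + r^{2(n-1)}u_x²)`. -/
theorem quadratic_dissipation (n : ℕ) (hn : 2 ≤ n) (μ lam : ℝ)
    (hμ : 0 < μ) (hlam : 0 < 2 * μ + (n : ℝ) * lam) :
    ∃ C > (0:ℝ),
      (∀ a b : ℝ,
        (2 * μ + lam) * (a + ((n : ℝ) - 1) * b) ^ 2
          - 2 * μ * ((n : ℝ) - 1) * (2 * a * b + ((n : ℝ) - 2) * b ^ 2)
        ≥ C * (a ^ 2 + b ^ 2)) ∧
      (∀ r v u ux w₁ w₂ : ℝ, r ≠ 0 →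
        w₁ = r ^ (n - 1) * ux + ((n : ℝ) - 1) * (v * u / r) →
        v * w₂ = 2 * (r ^ (n - 1) * ux) * (v * u / r)
          + ((n : ℝ) - 2) * (v * u / r) ^ 2 →
        (2 * μ + lam) * w₁ ^ 2 - 2 * μ * ((n : ℝ) - 1) * (v * w₂)
          ≥ C * (v ^ 2 * u ^ 2 / r ^ 2 + (r ^ (n - 1)) ^ 2 * ux ^ 2)) := by
  have hn' : (2:ℝ) ≤ (n:ℝ) := by exact_mod_cast hn
  have key : ∀ a b : ℝ,
        (2 * μ + lam) * (a + ((n : ℝ) - 1) * b) ^ 2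
          - 2 * μ * ((n : ℝ) - 1) * (2 * a * b + ((n : ℝ) - 2) * b ^ 2)
        ≥ min (2 * μ) (2 * μ + (n : ℝ) * lam) * (a ^ 2 + b ^ 2) := by
    intro a b
    have hc0 : 0 < min (2 * μ) (2 * μ + (n : ℝ) * lam) := lt_min (by linarith) hlam
    have h1 := min_le_left (2 * μ) (2 * μ + (n : ℝ) * lam)
    have h2 := min_le_right (2 * μ) (2 * μ + (n : ℝ) * lam)
    generalize min (2 * μ) (2 * μ + (n : ℝ) * lam) = c at *
    generalize (n : ℝ) = N at *
    have e1 : 0 ≤ (2 * μ - c) * ((N - 1) * (a - b) ^ 2) :=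
      mul_nonneg (by linarith) (mul_nonneg (by linarith) (sq_nonneg _))
    have e2 : 0 ≤ (2 * μ + N * lam - c) * (a + (N - 1) * b) ^ 2 :=
      mul_nonneg (by linarith) (sq_nonneg _)
    have e3 : 0 ≤ N * (c * ((N - 2) * b ^ 2)) :=
      mul_nonneg (by linarith) (mul_nonneg hc0.le (mul_nonneg (by linarith) (sq_nonneg _)))
    have hN : 0 < N := by linarith
    refine le_of_mul_le_mul_left ?_ hN
    linarith
  refine ⟨min (2 * μ) (2 * μ + (n : ℝ) * lam), lt_min (by linarith) hlam, key, ?_⟩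
  intro r v u ux w₁ w₂ hr h1 h2
  have h := key (r ^ (n - 1) * ux) (v * u / r)
  rw [h1, h2]
  have e : v ^ 2 * u ^ 2 / r ^ 2 + (r ^ (n - 1)) ^ 2 * ux ^ 2
      = (r ^ (n - 1) * ux) ^ 2 + (v * u / r) ^ 2 := by
    rw [div_pow, mul_pow, mul_pow]; ring
  rw [e]
  exact h
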